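/- For any x, y ∈ M_n, let x' and y' be the matrices obtained by applying one step of the Gibbs sampler on M_n to x and to y respectively, using the same uniformly random pair of distinct indices 1 ≤ i < j ≤ n and the same uniform λ ∈ [0,1]. Then E[‖x' − y'‖_2²] ≤ (1 − 2/(3n))·‖x − y‖_2², where the expectation is over the uniform choice of (i, j) and λ, and ‖x − y‖_2² = ∑_{i=1}^n ∑_{j=1}^2 (x[i,j] − y[i,j])². -/

import Mathlib

open MeasureTheory

noncomputable section

/-- Uniform probability measure on a finset. -/
def unifOn {α : Type*} [MeasurableSpace α] (s : Finset α) : Measure α :=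
  (s.card : ENNReal)⁻¹ • ∑ a ∈ s, Measure.dirac a

/-- Total variation distance between two measures. -/
def tvDist {α : Type*} [MeasurableSpace α] (μ ν : Measure α) : ℝ :=
  ⨆ A : {A : Set α // MeasurableSet A}, ((μ A).toReal - (ν A).toReal)

/-- The set `M_n` of nonnegative `n × 2` matrices with row sums `2` and column sums `n`. -/
def MSet (n : ℕ) : Set (Fin n × Fin 2 → ℝ) :=
  {x | (∀ p, 0 ≤ x p) ∧ (∀ i : Fin n, x (i, 0) + x (i, 1) = 2) ∧
    (∀ j : Fin 2, ∑ i : Fin n, x (i, j) = n)}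

/-- The uniform (normalized `(n-1)`-dimensional Hausdorff) measure on `M_n`. -/
def UM (n : ℕ) : Measure (Fin n × Fin 2 → ℝ) :=
  (μH[(n : ℝ) - 1] (MSet n))⁻¹ • (μH[(n : ℝ) - 1]).restrict (MSet n)

/-- One step of the Gibbs sampler on `M_n`, updating the pair of rows `u.1 = (i, j)`
using the uniform variable `u.2 = λ`. -/
def stepM (n : ℕ) (x : Fin n × Fin 2 → ℝ) (u : (Fin n × Fin n) × ℝ) :
    Fin n × Fin 2 → ℝ := fun p =>
  let i := u.1.1
  let j := u.1.2
  let l := u.2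
  let d := 2 - x (i, 0) - x (j, 0)
  if p = (i, 0) then (if 0 ≤ d then l * (2 - d) else 2 * l - (1 - l) * d)
  else if p = (j, 0) then (if 0 ≤ d then (1 - l) * (2 - d) else 2 * (1 - l) - l * d)
  else if p = (i, 1) then (if 0 ≤ d then 2 * (1 - l) + l * d else (1 - l) * (2 + d))
  else if p = (j, 1) then (if 0 ≤ d then 2 * l + (1 - l) * d else l * (2 + d))
  else x p

/-- The set of ordered pairs `(i, j)` with `i < j`. -/
def pairsF (n : ℕ) : Finset (Fin n × Fin n) := Finset.univ.filter fun p => p.1 < p.2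

/-- Law of the random update datum: `(i, j)` uniform among pairs `i < j`, and
`λ` uniform on `[0,1]`. -/
def driveM (n : ℕ) : Measure ((Fin n × Fin n) × ℝ) :=
  (unifOn (pairsF n)).prod ((volume : Measure ℝ).restrict (Set.Icc 0 1))

/-- Law of the Gibbs sampler on `M_n` after `T` steps started at `x`. -/
def lawM (n : ℕ) (x : Fin n × Fin 2 → ℝ) (T : ℕ) : Measure (Fin n × Fin 2 → ℝ) :=
  Measure.map (fun ω : Fin T → (Fin n × Fin n) × ℝ => (List.ofFn ω).foldl (stepM n) x)
    (Measure.pi fun _ => driveM n)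

/-- Law of the `(T+1)`-step path of the Gibbs sampler on `M_n` with initial distribution `μ`. -/
def pathM (n T : ℕ) (μ : Measure (Fin n × Fin 2 → ℝ)) :
    Measure (Fin (T + 1) → Fin n × Fin 2 → ℝ) :=
  Measure.map (fun p : (Fin n × Fin 2 → ℝ) × (Fin T → (Fin n × Fin n) × ℝ) =>
      fun s : Fin (T + 1) => ((List.ofFn p.2).take s).foldl (stepM n) p.1)
    (μ.prod (Measure.pi fun _ => driveM n))


/-!
When rows `i ≠ j` have first-column total `s`, the sampler places `x' (i, 0)` at the point dividing
the feasible interval `[max 0 (s - 2), min s 2]` in the ratio `λ : 1 - λ`. Both endpoints are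
monotone in `s` and they add up to `s`. So for totals `s` and `t` the differences `a` and `b` of the
endpoints have the same sign and `a + b = s - t`, whence
`∫ ((1 - λ) a + λ b)² = (a² + a b + b²) / 3 ≤ (s - t)² / 3`.
With `D = x (·, 0) - y (·, 0)`, averaging over `λ` thus removes at least
`Dᵢ² + Dⱼ² - 2/3 (Dᵢ + Dⱼ)²` from `∑ Dₖ²`. As `∑ Dₖ = 0`, these gains sum to `(n + 1) / 3 * ∑ Dₖ²`
over the `n (n - 1) / 2` pairs `i < j`, which is the rate `2 (n + 1) / (3 n (n - 1)) ≥ 2 / (3 n)`.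
-/

lemma max_sub_two_add_min (s : ℝ) : max 0 (s - 2) + min s 2 = s := by
  rcases le_total s 2 with h | h
  · rw [max_eq_left (by linarith), min_eq_left h, zero_add]
  · rw [max_eq_right (by linarith), min_eq_right h, sub_add_cancel]

lemma integral_sq_convexComb (a b : ℝ) :
    ∫ l in (0 : ℝ)..1, ((1 - l) * a + l * b) ^ 2 = (a ^ 2 + a * b + b ^ 2) / 3 := by
  have expand : ∀ l : ℝ, ((1 - l) * a + l * b) ^ 2 =
      a ^ 2 + 2 * a * (b - a) * l + (b - a) ^ 2 * l ^ 2 := fun l => by ring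
  simp only [expand]
  rw [intervalIntegral.integral_add, intervalIntegral.integral_add,
    intervalIntegral.integral_const, intervalIntegral.integral_const_mul,
    intervalIntegral.integral_const_mul, integral_id, integral_pow, smul_eq_mul]
  · push_cast
    ring
  all_goals exact Continuous.intervalIntegrable (by fun_prop) _ _

/-- The entry that one Gibbs step with uniform variable `l` writes at `(i, 0)` when the chosen rows
`i`, `j` have first-column total `s`: the point dividing the interval `[max 0 (s - 2), min s 2]` of
feasible values in the ratio `l : 1 - l`. The entry at `(j, 0)` is `gibbsEntry s (1 - l)`. -/
def gibbsEntry (s l : ℝ) : ℝ := (1 - l) * max 0 (s - 2) + l * min s 2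

lemma gibbsEntry_of_le_two {s : ℝ} (hs : s ≤ 2) (l : ℝ) : gibbsEntry s l = l * s := by
  rw [gibbsEntry, max_eq_left (by linarith), min_eq_left hs, mul_zero, zero_add]

lemma gibbsEntry_of_two_le {s : ℝ} (hs : 2 ≤ s) (l : ℝ) :
    gibbsEntry s l = (1 - l) * (s - 2) + l * 2 := by
  rw [gibbsEntry, max_eq_right (by linarith), min_eq_right hs]

@[fun_prop]
lemma continuous_gibbsEntry (s : ℝ) : Continuous (gibbsEntry s) := by
  unfold gibbsEntry
  fun_prop

lemma integral_sq_gibbsEntry_sub_le (s t : ℝ) :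
    ∫ l in (0 : ℝ)..1, (gibbsEntry s l - gibbsEntry t l) ^ 2 ≤ (s - t) ^ 2 / 3 := by
  set a := max 0 (s - 2) - max 0 (t - 2) with ha
  set b := min s 2 - min t 2 with hb
  have sub_eq : ∀ l, gibbsEntry s l - gibbsEntry t l = (1 - l) * a + l * b := fun l => by
    simp only [gibbsEntry, ha, hb]
    ring
  have add_eq : a + b = s - t := by
    linarith [max_sub_two_add_min s, max_sub_two_add_min t]
  have lower_mono : Monotone fun r : ℝ => max 0 (r - 2) :=
    fun _ _ h => max_le_max_left 0 (sub_le_sub_right h 2)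
  have upper_mono : Monotone fun r : ℝ => min r 2 := fun _ _ h => min_le_min_right 2 h
  have same_sign : 0 ≤ a * b := (lower_mono.monovary upper_mono).sub_mul_sub_nonneg t s
  simp only [sub_eq]
  rw [integral_sq_convexComb, ← add_eq]
  linarith

lemma integral_sq_gibbsEntry_one_sub_sub_le (s t : ℝ) :
    ∫ l in (0 : ℝ)..1, (gibbsEntry s (1 - l) - gibbsEntry t (1 - l)) ^ 2 ≤ (s - t) ^ 2 / 3 := by
  rw [intervalIntegral.integral_comp_sub_left (fun l => (gibbsEntry s l - gibbsEntry t l) ^ 2),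
    sub_self, sub_zero]
  exact integral_sq_gibbsEntry_sub_le s t

lemma sum_sq_sub_of_row_sum_eq {ι R : Type*} [Fintype ι] [CommRing R] {x y : ι × Fin 2 → R}
    (hrow : ∀ k, x (k, 0) + x (k, 1) = y (k, 0) + y (k, 1)) :
    ∑ q, (x q - y q) ^ 2 = 2 * ∑ k, (x (k, 0) - y (k, 0)) ^ 2 := by
  rw [Fintype.sum_prod_type, Finset.mul_sum]
  refine Finset.sum_congr rfl fun k _ => ?_
  have snd_col : x (k, 1) - y (k, 1) = -(x (k, 0) - y (k, 0)) := by
    linear_combination hrow k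
  rw [Fin.sum_univ_two, snd_col, neg_sq, two_mul]

section Step

variable {n : ℕ} {i j k : Fin n}

lemma stepM_apply_fst_zero (x : Fin n × Fin 2 → ℝ) (l : ℝ) :
    stepM n x ((i, j), l) (i, 0) = gibbsEntry (x (i, 0) + x (j, 0)) l := by
  simp only [stepM, if_true]
  split_ifs with h
  · rw [gibbsEntry_of_le_two (by linarith)]
    ring
  · rw [gibbsEntry_of_two_le (by linarith)]
    ring

lemma stepM_apply_snd_zero (hij : i ≠ j) (x : Fin n × Fin 2 → ℝ) (l : ℝ) :
    stepM n x ((i, j), l) (j, 0) = gibbsEntry (x (i, 0) + x (j, 0)) (1 - l) := by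
  simp only [stepM, Prod.mk.injEq, hij.symm, false_and, if_false, if_true]
  split_ifs with h
  · rw [gibbsEntry_of_le_two (by linarith)]
    ring
  · rw [gibbsEntry_of_two_le (by linarith)]
    ring

lemma stepM_apply_of_ne (hi : k ≠ i) (hj : k ≠ j) (x : Fin n × Fin 2 → ℝ) (l : ℝ) (c : Fin 2) :
    stepM n x ((i, j), l) (k, c) = x (k, c) := by
  simp only [stepM, Prod.mk.injEq, hi, hj, false_and, if_false]

lemma stepM_fst_row_sum (x : Fin n × Fin 2 → ℝ) (l : ℝ) :
    stepM n x ((i, j), l) (i, 0) + stepM n x ((i, j), l) (i, 1) = 2 := by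
  simp only [stepM, Prod.mk.injEq, one_ne_zero, and_false, if_false, if_true]
  split_ifs <;> ring

lemma stepM_snd_row_sum (hij : i ≠ j) (x : Fin n × Fin 2 → ℝ) (l : ℝ) :
    stepM n x ((i, j), l) (j, 0) + stepM n x ((i, j), l) (j, 1) = 2 := by
  simp only [stepM, Prod.mk.injEq, hij.symm, one_ne_zero, and_false, false_and, if_false, if_true]
  split_ifs <;> ring

lemma continuous_stepM (x : Fin n × Fin 2 → ℝ) (p : Fin n × Fin n) (q : Fin n × Fin 2) :
    Continuous fun l => stepM n x (p, l) q := by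
  simp only [stepM]
  split_ifs <;> fun_prop

variable {x y : Fin n × Fin 2 → ℝ}

lemma stepM_row_sum_eq
    (hrow : ∀ k, x (k, 0) + x (k, 1) = y (k, 0) + y (k, 1)) (l : ℝ) (k : Fin n) :
    stepM n x ((i, j), l) (k, 0) + stepM n x ((i, j), l) (k, 1) =
      stepM n y ((i, j), l) (k, 0) + stepM n y ((i, j), l) (k, 1) := by
  rcases eq_or_ne k i with rfl | hi
  · rw [stepM_fst_row_sum, stepM_fst_row_sum]
  rcases eq_or_ne k j with rfl | hj
  · rw [stepM_snd_row_sum hi.symm, stepM_snd_row_sum hi.symm]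
  simp only [stepM_apply_of_ne hi hj, hrow]

lemma sum_sq_stepM_sub (hij : i ≠ j)
    (hrow : ∀ k, x (k, 0) + x (k, 1) = y (k, 0) + y (k, 1)) (l : ℝ) :
    ∑ q, (stepM n x ((i, j), l) q - stepM n y ((i, j), l) q) ^ 2 =
      2 * (∑ k, (x (k, 0) - y (k, 0)) ^ 2
        - ((x (i, 0) - y (i, 0)) ^ 2 + (x (j, 0) - y (j, 0)) ^ 2)
        + ((gibbsEntry (x (i, 0) + x (j, 0)) l - gibbsEntry (y (i, 0) + y (j, 0)) l) ^ 2
          + (gibbsEntry (x (i, 0) + x (j, 0)) (1 - l)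
            - gibbsEntry (y (i, 0) + y (j, 0)) (1 - l)) ^ 2)) := by
  have col_change := Fintype.sum_eq_add (f := fun k =>
    (stepM n x ((i, j), l) (k, 0) - stepM n y ((i, j), l) (k, 0)) ^ 2
      - (x (k, 0) - y (k, 0)) ^ 2) i j hij fun k hk => by
        simp only [stepM_apply_of_ne hk.1 hk.2, sub_self]
  rw [Finset.sum_sub_distrib] at col_change
  simp only [stepM_apply_fst_zero, stepM_apply_snd_zero hij] at col_change
  rw [sum_sq_sub_of_row_sum_eq (stepM_row_sum_eq hrow l)]
  linarith

lemma integral_sum_sq_stepM_sub_le (hij : i ≠ j)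
    (hrow : ∀ k, x (k, 0) + x (k, 1) = y (k, 0) + y (k, 1)) :
    ∫ l in (0 : ℝ)..1, ∑ q, (stepM n x ((i, j), l) q - stepM n y ((i, j), l) q) ^ 2 ≤
      2 * (∑ k, (x (k, 0) - y (k, 0)) ^ 2
        - ((x (i, 0) - y (i, 0)) ^ 2 + (x (j, 0) - y (j, 0)) ^ 2
          - 2 / 3 * ((x (i, 0) - y (i, 0)) + (x (j, 0) - y (j, 0))) ^ 2)) := by
  simp only [sum_sq_stepM_sub hij hrow]
  have total_sub : (x (i, 0) - y (i, 0)) + (x (j, 0) - y (j, 0)) =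
      (x (i, 0) + x (j, 0)) - (y (i, 0) + y (j, 0)) := by ring
  rw [total_sub, intervalIntegral.integral_const_mul, intervalIntegral.integral_add,
    intervalIntegral.integral_add, intervalIntegral.integral_const, sub_zero, one_smul]
  · linarith [integral_sq_gibbsEntry_sub_le (x (i, 0) + x (j, 0)) (y (i, 0) + y (j, 0)),
      integral_sq_gibbsEntry_one_sub_sub_le (x (i, 0) + x (j, 0)) (y (i, 0) + y (j, 0))]
  all_goals exact Continuous.intervalIntegrable (by fun_prop) _ _

end Step

section Pairs

variable {n : ℕ}

lemma sum_pairsF_add_swap {G : Type*} [AddCommGroup G] (T : Fin n → Fin n → G) :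
    ∑ p ∈ pairsF n, (T p.1 p.2 + T p.2 p.1) = ∑ i, ∑ j, T i j - ∑ i, T i i := by
  have fiberwise : ∑ p ∈ pairsF n, (T p.1 p.2 + T p.2 p.1) =
      ∑ i, ∑ j ∈ Finset.Ioi i, (T i j + T j i) := by
    simp only [pairsF, Finset.sum_filter, Fintype.sum_prod_type, ← Finset.filter_lt_eq_Ioi]
  rw [fiberwise, Finset.sum_sum_Ioi_add_eq_sum_sum_off_diag fun i j => T j i,
    ← Finset.sum_sub_distrib]
  exact Finset.sum_congr rfl fun i _ =>
    eq_sub_of_add_eq' (Fintype.sum_eq_add_sum_compl i (T i)).symm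

lemma sum_pairsF_add {R : Type*} [CommRing R] (f : Fin n → R) :
    ∑ p ∈ pairsF n, (f p.1 + f p.2) = (n - 1) * ∑ i, f i := by
  rw [sum_pairsF_add_swap fun i _ => f i]
  simp only [Finset.sum_const, Finset.card_univ, Fintype.card_fin, nsmul_eq_mul, ← Finset.mul_sum]
  ring

lemma two_mul_sum_pairsF_mul {R : Type*} [CommRing R] (f : Fin n → R) :
    2 * ∑ p ∈ pairsF n, f p.1 * f p.2 = (∑ i, f i) ^ 2 - ∑ i, f i ^ 2 := by
  have add_swap := sum_pairsF_add_swap fun i j => f i * f j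
  simp only [mul_comm (f (Prod.snd _)), ← two_mul, ← Finset.mul_sum] at add_swap
  rw [add_swap, sq, Finset.sum_mul]
  simp only [sq]

lemma card_pairsF (n : ℕ) : ((pairsF n).card : ℝ) = n * (n - 1) / 2 := by
  have := sum_pairsF_add (n := n) fun _ => (1 / 2 : ℝ)
  norm_num at this
  linarith

lemma sum_pairsF_sq_sub_sq_add {D : Fin n → ℝ} (hD : ∑ k, D k = 0) :
    ∑ p ∈ pairsF n, (D p.1 ^ 2 + D p.2 ^ 2 - 2 / 3 * (D p.1 + D p.2) ^ 2) =
      (n + 1) / 3 * ∑ k, D k ^ 2 := by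
  have expand : ∀ p : Fin n × Fin n, D p.1 ^ 2 + D p.2 ^ 2 - 2 / 3 * (D p.1 + D p.2) ^ 2 =
      1 / 3 * (D p.1 ^ 2 + D p.2 ^ 2) - 4 / 3 * (D p.1 * D p.2) := fun p => by ring
  have cross := two_mul_sum_pairsF_mul D
  rw [hD] at cross
  simp only [expand, Finset.sum_sub_distrib, ← Finset.mul_sum, sum_pairsF_add fun k => D k ^ 2]
  linarith

end Pairs

lemma lintegral_unifOn {α : Type*} [MeasurableSpace α] [MeasurableSingletonClass α]
    (s : Finset α) (f : α → ENNReal) :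
    ∫⁻ a, f a ∂unifOn s = (s.card : ENNReal)⁻¹ * ∑ a ∈ s, f a := by
  simp only [unifOn, lintegral_smul_measure, lintegral_finsetSum_measure, lintegral_dirac,
    smul_eq_mul]

lemma lintegral_Icc_ofReal {f : ℝ → ℝ} {a b : ℝ} (hab : a ≤ b) (hf : Continuous f)
    (hf0 : ∀ l, 0 ≤ f l) :
    ∫⁻ l in Set.Icc a b, ENNReal.ofReal (f l) = ENNReal.ofReal (∫ l in a..b, f l) := by
  rw [intervalIntegral.integral_of_le hab, ← integral_Icc_eq_integral_Ioc,
    ofReal_integral_eq_lintegral_ofReal hf.integrableOn_Icc (.of_forall hf0)]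

lemma lintegral_driveM_ofReal_le {n : ℕ} (hn : 2 ≤ n) {F : (Fin n × Fin n) × ℝ → ℝ}
    (hF : ∀ p, Continuous fun l => F (p, l)) (hF0 : ∀ u, 0 ≤ F u) :
    ∫⁻ u, ENNReal.ofReal (F u) ∂driveM n ≤
      ENNReal.ofReal ((∑ p ∈ pairsF n, ∫ l in (0 : ℝ)..1, F (p, l)) / (pairsF n).card) := by
  have card_pos : (0 : ℝ) < (pairsF n).card := by
    have : (2 : ℝ) ≤ n := mod_cast hn
    rw [card_pairsF]
    nlinarith
  refine (lintegral_prod_le _).trans_eq ?_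
  rw [lintegral_unifOn, ENNReal.ofReal_div_of_pos card_pos, ENNReal.ofReal_natCast,
    ENNReal.ofReal_sum_of_nonneg fun p _ =>
      intervalIntegral.integral_nonneg zero_le_one fun l _ => hF0 (p, l),
    ENNReal.div_eq_inv_mul]
  simp only [lintegral_Icc_ofReal zero_le_one (hF _) fun l => hF0 (_, l)]

lemma sum_pairsF_integral_le {n : ℕ} {x y : Fin n × Fin 2 → ℝ}
    (hrow : ∀ i, x (i, 0) + x (i, 1) = y (i, 0) + y (i, 1))
    (hcol : ∑ i, x (i, 0) = ∑ i, y (i, 0)) :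
    ∑ p ∈ pairsF n, ∫ l in (0 : ℝ)..1, ∑ q, (stepM n x (p, l) q - stepM n y (p, l) q) ^ 2 ≤
      ((pairsF n).card - (n + 1) / 3) * ∑ q, (x q - y q) ^ 2 := by
  have sum_sub : ∑ k, (x (k, 0) - y (k, 0)) = 0 := by
    rw [Finset.sum_sub_distrib, hcol, sub_self]
  calc _ ≤ ∑ p ∈ pairsF n, 2 * (∑ k, (x (k, 0) - y (k, 0)) ^ 2
        - ((x (p.1, 0) - y (p.1, 0)) ^ 2 + (x (p.2, 0) - y (p.2, 0)) ^ 2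
          - 2 / 3 * ((x (p.1, 0) - y (p.1, 0)) + (x (p.2, 0) - y (p.2, 0))) ^ 2)) :=
        Finset.sum_le_sum fun p hp =>
          integral_sum_sq_stepM_sub_le (Finset.mem_filter.mp hp).2.ne hrow
    _ = _ := by
        rw [← Finset.mul_sum, Finset.sum_sub_distrib, sum_pairsF_sq_sub_sq_add sum_sub,
          Finset.sum_const, nsmul_eq_mul, sum_sq_sub_of_row_sum_eq hrow]
        ring

theorem narrow_matrices_one_step_L2_contraction_general
    (n : ℕ) (hn : 2 ≤ n) (x y : Fin n × Fin 2 → ℝ)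
    (hrow : ∀ i, x (i, 0) + x (i, 1) = y (i, 0) + y (i, 1))
    (hcol : ∑ i, x (i, 0) = ∑ i, y (i, 0)) :
    ∫⁻ u : (Fin n × Fin n) × ℝ,
        ENNReal.ofReal (∑ q : Fin n × Fin 2, (stepM n x u q - stepM n y u q) ^ 2)
        ∂(driveM n) ≤
      ENNReal.ofReal ((1 - 2 * (n + 1) / (3 * n * (n - 1))) *
        ∑ q : Fin n × Fin 2, (x q - y q) ^ 2) := by
  have two_le : (2 : ℝ) ≤ n := mod_cast hn
  have : (0 : ℝ) < n := by linarith
  have pred_pos : (0 : ℝ) < n - 1 := by linarith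
  refine (lintegral_driveM_ofReal_le hn (fun p => ?_) fun u => by positivity).trans
    (ENNReal.ofReal_le_ofReal ?_)
  · have := continuous_stepM x p
    have := continuous_stepM y p
    fun_prop
  · rw [card_pairsF, div_le_iff₀ (by positivity)]
    refine (sum_pairsF_integral_le hrow hcol).trans_eq ?_
    rw [card_pairsF]
    field_simp

lemma contraction_rate_le {n : ℕ} (hn : 2 ≤ n) :
    1 - 2 * (n + 1) / (3 * n * (n - 1)) ≤ (1 - 2 / (3 * n) : ℝ) := by
  have two_le : (2 : ℝ) ≤ n := mod_cast hn
  have : (0 : ℝ) < n := by linarith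
  have pred_pos : (0 : ℝ) < n - 1 := by linarith
  rw [sub_le_sub_iff_left, div_le_div_iff₀ (by positivity) (by positivity)]
  nlinarith

/-- One-step `L²` contraction for the proportional coupling on narrow matrices:
`E[‖x' - y'‖₂²] ≤ (1 - 2/(3n)) ‖x - y‖₂²`. -/
theorem narrow_matrices_one_step_L2_contraction
    (n : ℕ) (hn : 2 ≤ n)
    (x y : Fin n × Fin 2 → ℝ) (hx : x ∈ MSet n) (hy : y ∈ MSet n) :
    ∫⁻ u : (Fin n × Fin n) × ℝ,
        ENNReal.ofReal (∑ q : Fin n × Fin 2, (stepM n x u q - stepM n y u q) ^ 2)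
        ∂(driveM n) ≤
      ENNReal.ofReal ((1 - 2 / (3 * n)) * ∑ q : Fin n × Fin 2, (x q - y q) ^ 2) :=
  (narrow_matrices_one_step_L2_contraction_general n hn x y
    (fun i => (hx.2.1 i).trans (hy.2.1 i).symm) ((hx.2.2 0).trans (hy.2.2 0).symm)).trans <|
    ENNReal.ofReal_le_ofReal <|
      mul_le_mul_of_nonneg_right (contraction_rate_le hn) (by positivity)

end
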